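/- arXiv:1804.09449 — 4 statements merged into one kernel-verified Lean document; each statement's English description precedes it below -/
import Mathlib

section
/- Let G be a finite simple graph that is 4-edge-connected, let v be a vertex of G, and let e, f, g be three pairwise distinct edges incident to v. Then G admits a nowhere-zero Z_2^2-flow θ such that θ(e) ≠ θ(f) and θ(e) ≠ θ(g). -/
open SimpleGraph

/-- A proper edge-coloring: distinct edges of `G` sharing an endpoint get different colors. -/
def IsProperEdgeColoring {V C : Type*} (G : SimpleGraph V) (c : Sym2 V → C) : Prop :=
  ∀ e ∈ G.edgeSet, ∀ f ∈ G.edgeSet, e ≠ f → (∃ v : V, v ∈ e ∧ v ∈ f) → c e ≠ c f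

/-- `S_c(v)`: the set of colors appearing on edges incident to `v`. -/
def colorSet {V C : Type*} (G : SimpleGraph V) (c : Sym2 V → C) (v : V) : Set C :=
  c '' G.incidenceSet v

/-- The edge `uv` is poor: exactly 3 colors appear around its endpoints. -/
def IsPoorAt {V C : Type*} (G : SimpleGraph V) (c : Sym2 V → C) (u v : V) : Prop :=
  (colorSet G c u ∪ colorSet G c v).ncard = 3

/-- The edge `uv` is rich: exactly 5 colors appear around its endpoints. -/
def IsRichAt {V C : Type*} (G : SimpleGraph V) (c : Sym2 V → C) (u v : V) : Prop :=
  (colorSet G c u ∪ colorSet G c v).ncard = 5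

/-- A normal edge-coloring: a proper edge-coloring in which every edge is poor or rich. -/
def IsNormalEdgeColoring {V C : Type*} (G : SimpleGraph V) (c : Sym2 V → C) : Prop :=
  IsProperEdgeColoring G c ∧
    ∀ u v : V, G.Adj u v → IsPoorAt G c u v ∨ IsRichAt G c u v

/-- A nowhere-zero flow with values in an additive group `M` (all elements self-inverse in our
applications): nonzero on every edge, and at every vertex the values on incident edges sum to 0. -/
def IsNowhereZeroFlow {V M : Type*} [AddCommMonoid M] (G : SimpleGraph V)
    (θ : Sym2 V → M) : Prop :=
  (∀ e ∈ G.edgeSet, θ e ≠ 0) ∧ ∀ v : V, ∑ᶠ e ∈ G.incidenceSet v, θ e = 0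

/-- `G` is `k`-edge-connected: connected, and still connected after deleting any set of
fewer than `k` edges. -/
def EdgeConnGe {V : Type*} (G : SimpleGraph V) (k : ℕ) : Prop :=
  G.Connected ∧ ∀ s : Set (Sym2 V), s.ncard < k → (G.deleteEdges s).Connected

/-- `G` is cubic: every vertex has degree 3. -/
def IsCubic {V : Type*} (G : SimpleGraph V) : Prop :=
  ∀ v : V, (G.neighborSet v).ncard = 3

/-- `G` is bridgeless: no edge is a bridge. -/
def Bridgeless {V : Type*} (G : SimpleGraph V) : Prop :=
  ∀ e ∈ G.edgeSet, ¬ G.IsBridge e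

/-!
Take two edge-disjoint connected spanning subgraphs `T₁`, `T₂` of `G` avoiding `f` and `g`,
and assume that `e` is not in `T₁` (otherwise interchange them). A `ZMod 2`-flow can be prescribed
arbitrarily off a connected spanning subgraph, so there is one with value `0` at `f` and `g` and
value `1` at all other edges off `T₁`, and another with value `1` off `T₂`. Taken as the two
coordinates of `θ`, they vanish simultaneously nowhere, and the first one separates `e` from `f`
and `g`.

The subgraphs exist by the Nash-Williams–Tutte argument, run in linear algebra: identify an edge
with its boundary modulo `2`, so that forests become linearly independent sets. A packing of `k`
disjoint independent sets which covers as much as possible admits, by exchanging elements, a set `S`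
of edges containing everything uncovered and spanned by the part in `S` of each of the `k` sets.
Every edge joining two components of `S` is then used by the packing or among the at most `k`
deleted edges. Since `2 * k`-edge-connectivity provides at least `k * c` such edges when there are
`c ≥ 2` components, counting forces all `k` forests to be spanning trees.
-/

open Function Relation Submodule

section Packing

variable {K M α κ : Type*} [DivisionRing K] [AddCommGroup M] [Module K M] {φ : α → M}

theorem finrank_span_image_eq_ncard {I : Set α} (hI : LinearIndepOn K φ I) :
    Module.finrank K (span K (φ '' I)) = I.ncard := by
  rw [Module.finrank, ← Cardinal.toNat_toENat, toENat_rank_span_set hI, Set.ncard_def]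

theorem mem_span_image_exchangeable {I : Set α} {x : α} (hI : LinearIndepOn K φ I)
    (hx : φ x ∈ span K (φ '' I)) :
    φ x ∈ span K (φ '' {y ∈ I | LinearIndepOn K φ (insert x (I \ {y}))}) := by
  obtain ⟨l, hl, hlx⟩ := (Finsupp.mem_span_image_iff_linearCombination K).1 hx
  refine (Finsupp.mem_span_image_iff_linearCombination K).2 ⟨l, fun y hy ↦ ⟨hl hy, ?_⟩, hlx⟩
  refine (hI.mono Set.sdiff_subset).insert fun hxy ↦ Finsupp.mem_support_iff.1 hy ?_
  obtain ⟨l', hl', hlx'⟩ := (Finsupp.mem_span_image_iff_linearCombination K).1 hxy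
  have l_eq : l = l' := linearIndepOn_iffₛ.1 hI l hl l'
    (Finsupp.supported_mono Set.sdiff_subset hl') (hlx.trans hlx'.symm)
  rw [l_eq]
  exact Finsupp.notMem_support_iff.1 fun hy' ↦ (hl' hy').2 rfl

variable (K φ) in
/-- A partial coloring (`none` marks the uncolored indices) of a family of vectors whose color
classes are linearly independent: the encoding used here for a packing of disjoint linearly
independent subfamilies. -/
def IsIndepColoring (c : α → Option κ) : Prop :=
  ∀ i, LinearIndepOn K φ (c ⁻¹' {some i})

variable (K φ) in
/-- An independent coloring leaving as few indices as possible uncolored, i.e. a packing covering as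
many indices as possible. -/
def IsMaxIndepColoring (c : α → Option κ) : Prop :=
  MinimalFor (IsIndepColoring K φ) (fun c' : α → Option κ ↦ (c' ⁻¹' {none}).ncard) c

variable {c c' : α → Option κ} {x y : α} {i : κ}

theorem IsMaxIndepColoring.mem_span [Finite α] (hc : IsMaxIndepColoring K φ c) (hx : c x = none)
    (i : κ) : φ x ∈ span K (φ '' (c ⁻¹' {some i})) := by
  classical
  by_contra hn
  have h_indep : IsIndepColoring K φ (update c x (some i)) := by
    intro j
    obtain rfl | hij := eq_or_ne i j
    · exact ((hc.1 i).insert hn).mono (by grind)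
    · exact (hc.1 j).mono (by grind)
  have uncolored_ssubset : update c x (some i) ⁻¹' {none} ⊂ c ⁻¹' {none} :=
    Set.ssubset_iff_exists.2 ⟨by grind, x, hx, by simp⟩
  exact (Set.ncard_lt_ncard uncolored_ssubset).not_ge
    (hc.2 h_indep (Set.ncard_le_ncard uncolored_ssubset.subset))

section Exchange

variable [DecidableEq α]

variable (K φ) in
/-- An exchange step between independent colorings: an uncolored index takes over the color of
another one. -/
def IsExchange (c c' : α → Option κ) : Prop :=
  IsIndepColoring K φ c' ∧ ∃ x y, c x = none ∧ c' = c ∘ Equiv.swap x y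

variable (K φ) in
/-- The indices which some sequence of exchanges starting from `c` leaves uncolored; for a
maximal `c` they form a set spanned by its intersection with each color class. -/
def releasable (c : α → Option κ) : Set α :=
  {x | ∃ c', ReflTransGen (IsExchange K φ) c c' ∧ c' x = none}

theorem IsIndepColoring.comp_swap (hc : IsIndepColoring K φ c) (hx : c x = none)
    (hy : c y = some i) (hxy : LinearIndepOn K φ (insert x (c ⁻¹' {some i} \ {y}))) :
    IsIndepColoring K φ (c ∘ Equiv.swap x y) := by
  intro j
  obtain rfl | hij := eq_or_ne i j
  · refine hxy.mono fun z hz ↦ ?_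
    grind
  · refine (hc j).mono fun z hz ↦ ?_
    grind

theorem IsExchange.releasable_subset (h : IsExchange K φ c c') :
    releasable K φ c' ⊆ releasable K φ c :=
  fun _ ⟨d, hd, hx⟩ ↦ ⟨d, hd.head h, hx⟩

namespace IsMaxIndepColoring

theorem of_isExchange (hc : IsMaxIndepColoring K φ c) (h : IsExchange K φ c c') :
    IsMaxIndepColoring K φ c' := by
  obtain ⟨hc', x, y, -, rfl⟩ := h
  have ncard_eq : ((c ∘ Equiv.swap x y) ⁻¹' {none}).ncard = (c ⁻¹' {none}).ncard := by
    rw [Set.preimage_comp]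
    exact Set.ncard_preimage_of_injective_subset_range (Equiv.injective _) (by simp)
  refine ⟨hc', fun d hd hle ↦ ?_⟩
  simp only [ncard_eq] at hle ⊢
  exact hc.2 hd hle

theorem mem_span_inter_releasable [Finite α] (hc : IsMaxIndepColoring K φ c) (hx : c x = none)
    (i : κ) : φ x ∈ span K (φ '' (c ⁻¹' {some i} ∩ releasable K φ c)) := by
  refine span_mono (Set.image_mono ?_) (mem_span_image_exchangeable (hc.1 i) (hc.mem_span hx i))
  rintro y ⟨hy, hxy⟩
  exact ⟨hy, c ∘ Equiv.swap x y, .single ⟨hc.1.comp_swap hx hy hxy, x, y, hx, rfl⟩, by simpa⟩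

theorem span_inter_releasable_le [Finite α] (hc : IsMaxIndepColoring K φ c)
    (h : IsExchange K φ c c') (i : κ) :
    span K (φ '' (c' ⁻¹' {some i} ∩ releasable K φ c)) ≤
      span K (φ '' (c ⁻¹' {some i} ∩ releasable K φ c)) := by
  obtain ⟨-, x, y, hx, rfl⟩ := h
  rw [span_le]
  rintro _ ⟨z, ⟨hz, hz_mem⟩, rfl⟩
  obtain rfl | hzx := eq_or_ne z x
  · exact hc.mem_span_inter_releasable hx i
  · refine subset_span ⟨z, ⟨?_, hz_mem⟩, rfl⟩
    grind

theorem mem_span_of_mem_releasable [Finite α] (hc : IsMaxIndepColoring K φ c)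
    (hx : x ∈ releasable K φ c) (i : κ) :
    φ x ∈ span K (φ '' (c ⁻¹' {some i} ∩ releasable K φ c)) := by
  obtain ⟨c', hcc', hx⟩ := hx
  induction hcc' using ReflTransGen.head_induction_on with
  | refl => exact hc.mem_span_inter_releasable hx i
  | head h _ ih =>
    refine hc.span_inter_releasable_le h i (span_mono ?_ (ih (hc.of_isExchange h)))
    exact Set.image_mono (Set.inter_subset_inter_right _ h.releasable_subset)

end IsMaxIndepColoring

end Exchange

variable (K φ κ) in
theorem exists_isIndepColoring_mem_span [Finite α] :
    ∃ (c : α → Option κ) (S : Set α), IsIndepColoring K φ c ∧ c ⁻¹' {none} ⊆ S ∧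
      ∀ x ∈ S, ∀ i, φ x ∈ span K (φ '' (c ⁻¹' {some i} ∩ S)) := by
  classical
  obtain ⟨c, hc⟩ : ∃ c : α → Option κ, IsMaxIndepColoring K φ c :=
    exists_minimalFor_of_wellFoundedLT _ _ ⟨fun _ ↦ none, fun i ↦ by simp [Set.preimage]⟩
  exact ⟨c, releasable K φ c, hc.1, fun x hx ↦ ⟨c, .refl, hx⟩,
    fun x hx i ↦ hc.mem_span_of_mem_releasable hx i⟩

variable (K φ κ) in
theorem exists_disjoint_linearIndepOn {E : Set α} (hE : E.Finite) :
    ∃ (I : κ → Set α) (S : Set α), Pairwise (Disjoint on I) ∧ (∀ i, I i ⊆ E) ∧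
      (∀ i, LinearIndepOn K φ (I i)) ∧ E \ S ⊆ ⋃ i, I i ∧
      ∀ x ∈ S, ∀ i, φ x ∈ span K (φ '' (I i ∩ S)) := by
  have := hE.to_subtype
  obtain ⟨c, S, hc, h_none, hS⟩ := exists_isIndepColoring_mem_span K κ (fun x : E ↦ φ x)
  refine ⟨fun i ↦ (↑) '' (c ⁻¹' {some i}), (↑) '' S, fun i j hij ↦ ?_, fun i ↦ by simp,
    fun i ↦ (hc i).image_of_comp _ φ, ?_, ?_⟩
  · refine (Set.disjoint_image_iff Subtype.val_injective).2 (Disjoint.preimage c ?_)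
    simpa using hij
  · rintro x ⟨hxE, hxS⟩
    obtain ⟨i, hi⟩ := Option.ne_none_iff_exists'.1 fun h ↦ hxS ⟨⟨x, hxE⟩, h_none h, rfl⟩
    exact Set.mem_iUnion.2 ⟨i, ⟨x, hxE⟩, hi, rfl⟩
  · rintro _ ⟨x, hx, rfl⟩ i
    rw [← Set.image_inter Subtype.val_injective, Set.image_image]
    exact hS x hx i

end Packing

section Rank

variable {V : Type*}

/-- The boundary of an edge modulo `2`, i.e. its column in the incidence matrix of a graph over
`ZMod 2`: the sum of its two endpoints in the free `ZMod 2`-module on the vertices. Loops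
have boundary `0`. -/
noncomputable def edgeBoundary : Sym2 V → V →₀ ZMod 2 :=
  Sym2.lift ⟨fun a b ↦ .single a 1 + .single b 1, fun _ _ ↦ add_comm _ _⟩

theorem edgeBoundary_mk (a b : V) :
    edgeBoundary s(a, b) = Finsupp.single a (1 : ZMod 2) + Finsupp.single b 1 :=
  rfl

theorem edgeBoundary_apply [DecidableEq V] {e : Sym2 V} (he : ¬e.IsDiag) (v : V) :
    edgeBoundary e v = if v ∈ e then 1 else 0 := by
  induction e using Sym2.ind with | _ a b
  have hab : a ≠ b := he
  simp only [edgeBoundary_mk, Finsupp.add_apply, Finsupp.single_apply, Sym2.mem_iff]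
  grind

theorem edgeBoundary_mem_span_of_reachable {S : Set (Sym2 V)} {u w : V}
    (h : (fromEdgeSet S).Reachable u w) :
    edgeBoundary s(u, w) ∈ span (ZMod 2) (edgeBoundary '' S) := by
  obtain ⟨p⟩ := h
  induction p with
  | nil => simp [edgeBoundary_mk, ZModModule.add_self]
  | @cons u v w huv _ ih =>
    have huv_mem : edgeBoundary s(u, v) ∈ span (ZMod 2) (edgeBoundary '' S) :=
      subset_span (Set.mem_image_of_mem _ huv.1)
    have telescope : edgeBoundary s(u, w) = edgeBoundary s(u, v) + edgeBoundary s(v, w) :=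
      (ZModModule.add_add_add_cancel _ _ _).symm
    exact telescope ▸ add_mem huv_mem ih

theorem add_mapDomain_mem_span_edgeBoundary {S : Set (Sym2 V)} {r : V → V}
    (hr : ∀ v, (fromEdgeSet S).Reachable v (r v)) (x : V →₀ ZMod 2) :
    x + x.mapDomain r ∈ span (ZMod 2) (edgeBoundary '' S) := by
  induction x using Finsupp.induction_linear with
  | zero => simp
  | add x y hx hy =>
    rw [Finsupp.mapDomain_add, add_add_add_comm]
    exact add_mem hx hy
  | single v a =>
    simpa [edgeBoundary_mk] using smul_mem _ a (edgeBoundary_mem_span_of_reachable (hr v))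

theorem span_edgeBoundary_eq_ker (S : Set (Sym2 V)) :
    span (ZMod 2) (edgeBoundary '' S) = LinearMap.ker
      (Finsupp.lmapDomain (ZMod 2) (ZMod 2) (fromEdgeSet S).connectedComponentMk) := by
  apply le_antisymm
  · rw [span_le]
    rintro _ ⟨e, he, rfl⟩
    induction e using Sym2.ind with | _ a b
    have same_component : (fromEdgeSet S).connectedComponentMk a =
        (fromEdgeSet S).connectedComponentMk b := by
      obtain rfl | hab := eq_or_ne a b
      · rfl
      · exact ConnectedComponent.sound (Adj.reachable ⟨he, hab⟩)
    simp [edgeBoundary_mk, Finsupp.mapDomain_add, same_component, ZModModule.add_self]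
  · intro x hx
    have hx_map : x.mapDomain (fromEdgeSet S).connectedComponentMk = 0 := hx
    have mk_surjective : Surjective (fromEdgeSet S).connectedComponentMk := Quot.mk_surjective
    obtain ⟨rep, h_rep⟩ := mk_surjective.hasRightInverse
    have reachable_rep (v : V) :
        (fromEdgeSet S).Reachable v (rep ((fromEdgeSet S).connectedComponentMk v)) :=
      ConnectedComponent.exact (h_rep _).symm
    simpa only [Finsupp.mapDomain_comp, hx_map, Finsupp.mapDomain_zero, add_zero] using
      add_mapDomain_mem_span_edgeBoundary (r := rep ∘ _) reachable_rep x

theorem finrank_span_edgeBoundary_add_card_connectedComponent [Finite V] (S : Set (Sym2 V)) :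
    Module.finrank (ZMod 2) (span (ZMod 2) (edgeBoundary '' S)) +
      Nat.card (fromEdgeSet S).ConnectedComponent = Nat.card V := by
  cases nonempty_fintype V
  have := Fintype.ofFinite (fromEdgeSet S).ConnectedComponent
  have h_range : LinearMap.range (Finsupp.lmapDomain (ZMod 2) (ZMod 2)
      (fromEdgeSet S).connectedComponentMk) = ⊤ :=
    LinearMap.range_eq_top.2 (Finsupp.mapDomain_surjective Quot.mk_surjective)
  have rank_nullity := LinearMap.finrank_range_add_finrank_ker
    (Finsupp.lmapDomain (ZMod 2) (ZMod 2) (fromEdgeSet S).connectedComponentMk)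
  rw [h_range, finrank_top, Module.finrank_finsupp_self, Module.finrank_finsupp_self,
    ← span_edgeBoundary_eq_ker] at rank_nullity
  rw [Nat.card_eq_fintype_card, Nat.card_eq_fintype_card, add_comm, rank_nullity]

theorem card_connectedComponent_add_ncard_sdiff_le [Finite V] {I S : Set (Sym2 V)}
    (hI : LinearIndepOn (ZMod 2) edgeBoundary I)
    (hS : ∀ e ∈ S, edgeBoundary e ∈ span (ZMod 2) (edgeBoundary '' (I ∩ S))) :
    Nat.card (fromEdgeSet I).ConnectedComponent + (I \ S).ncard ≤
      Nat.card (fromEdgeSet S).ConnectedComponent := by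
  have rank_I := finrank_span_edgeBoundary_add_card_connectedComponent I
  have rank_S := finrank_span_edgeBoundary_add_card_connectedComponent S
  have rank_S_le : Module.finrank (ZMod 2) (span (ZMod 2) (edgeBoundary '' S)) ≤
      (I ∩ S).ncard := by
    rw [← finrank_span_image_eq_ncard (hI.mono Set.inter_subset_left)]
    exact finrank_mono (span_le.2 (Set.image_subset_iff.2 hS))
  rw [finrank_span_image_eq_ncard hI] at rank_I
  have card_split := Set.ncard_inter_add_ncard_sdiff_eq_ncard I S
  lia

end Rank

section Cuts

variable {V ι : Type*} {G : SimpleGraph V} {k : ℕ}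

theorem EdgeConnGe.isEdgeConnected (hG : EdgeConnGe G k) : G.IsEdgeConnected k := by
  intro u w s hs
  have hs_fin : s.Finite := Set.encard_lt_top_iff.1 (hs.trans (ENat.natCast_lt_top k))
  rw [← hs_fin.cast_ncard_eq, Nat.cast_lt] at hs
  exact (hG.2 s hs).preconnected u w

/-- The edges of `G` joining different parts of the partition of the vertices into the fibers
of `π`. -/
def crossingEdges (G : SimpleGraph V) (π : V → ι) : Set (Sym2 V) :=
  {e ∈ G.edgeSet | ¬(e.map π).IsDiag}

theorem le_ncard_crossingEdges_mem_map [Finite V] (hG : G.IsEdgeConnected k) {π : V → ι}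
    {u w : V} (h : π w ≠ π u) : k ≤ {e ∈ crossingEdges G π | π u ∈ e.map π}.ncard := by
  by_contra! hlt
  obtain ⟨p⟩ := hG u w (s := {e ∈ crossingEdges G π | π u ∈ e.map π}) (by
    rwa [← (Set.toFinite _).cast_ncard_eq, Nat.cast_lt])
  obtain ⟨d, -, hd_fst, hd_snd⟩ := p.exists_boundary_dart (π ⁻¹' {π u}) rfl h
  obtain ⟨hd_adj, hd_notMem⟩ := deleteEdges_adj.1 d.adj
  have hd_fst : π d.fst = π u := hd_fst
  have hd_snd : π d.snd ≠ π u := hd_snd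
  refine hd_notMem ⟨⟨hd_adj, ?_⟩, ?_⟩
  · simpa [hd_fst] using hd_snd.symm
  · simp [hd_fst]

theorem card_mul_le_ncard_crossingEdges_mul_two [Finite V] [Nontrivial ι]
    (hG : G.IsEdgeConnected k) {π : V → ι} (hπ : Surjective π) :
    Nat.card ι * k ≤ (crossingEdges G π).ncard * 2 := by
  classical
  have := Finite.of_surjective π hπ
  have := Fintype.ofFinite ι
  rw [Nat.card_eq_fintype_card, ← Finset.card_univ, Set.ncard_eq_toFinset_card _]
  refine Finset.card_mul_le_card_mul (fun i e ↦ i ∈ e.map π) (fun i _ ↦ ?_) fun e he ↦ ?_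
  · obtain ⟨u, rfl⟩ := hπ i
    obtain ⟨j, hj⟩ := exists_ne (π u)
    obtain ⟨w, rfl⟩ := hπ j
    convert le_ncard_crossingEdges_mem_map hG hj
    rw [← Set.ncard_coe_finset]
    simp [Finset.bipartiteAbove]
  · rw [← Sym2.card_toFinset_of_not_isDiag (e.map π) ((Set.Finite.mem_toFinset _).1 he).2]
    exact Finset.card_le_card fun i hi ↦
      Sym2.mem_toFinset.2 (Finset.mem_bipartiteBelow _ |>.1 hi).2

theorem crossingEdges_connectedComponentMk_subset (G : SimpleGraph V) (S : Set (Sym2 V)) :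
    crossingEdges G (fromEdgeSet S).connectedComponentMk ⊆ G.edgeSet \ S := by
  rintro e ⟨he, h_cross⟩
  refine ⟨he, fun heS ↦ h_cross ?_⟩
  induction e using Sym2.ind with | _ a b
  exact ConnectedComponent.sound (Adj.reachable ⟨heS, G.ne_of_adj he⟩)

end Cuts

section TreePacking

variable {V : Type*} [Finite V] {G : SimpleGraph V} {k : ℕ}

theorem connected_of_card_connectedComponent_le_one [Nonempty V]
    (h : Nat.card G.ConnectedComponent ≤ 1) : G.Connected := by
  have := Finite.card_le_one_iff_subsingleton.1 h
  exact ⟨fun u w ↦ ConnectedComponent.exact (Subsingleton.elim _ _)⟩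

theorem mul_card_connectedComponent_le (hG : G.IsEdgeConnected (2 * k)) {F S : Set (Sym2 V)}
    {I : Fin k → Set (Sym2 V)} (hF : F.ncard ≤ k) (h_cover : (G.edgeSet \ F) \ S ⊆ ⋃ i, I i) :
    k * Nat.card (fromEdgeSet S).ConnectedComponent ≤ k + ∑ i, (I i \ S).ncard := by
  obtain h_one | h_two := le_or_gt (Nat.card (fromEdgeSet S).ConnectedComponent) 1
  · exact (Nat.mul_le_mul_left k h_one).trans (by lia)
  have := Finite.one_lt_card_iff_nontrivial.1 h_two
  have h_subset : crossingEdges G (fromEdgeSet S).connectedComponentMk ⊆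
      F ∪ ⋃ i ∈ Finset.univ, I i \ S := by
    intro e he
    obtain ⟨heG, heS⟩ := crossingEdges_connectedComponentMk_subset G S he
    by_cases heF : e ∈ F
    · exact .inl heF
    · obtain ⟨i, hi⟩ := Set.mem_iUnion.1 (h_cover ⟨⟨heG, heF⟩, heS⟩)
      exact .inr (by simpa using ⟨⟨i, hi⟩, heS⟩)
  have ncard_crossing_le := calc
    (crossingEdges G (fromEdgeSet S).connectedComponentMk).ncard
      ≤ (F ∪ ⋃ i ∈ Finset.univ, I i \ S).ncard := Set.ncard_le_ncard h_subset
    _ ≤ F.ncard + (⋃ i ∈ Finset.univ, I i \ S).ncard := Set.ncard_union_le _ _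
    _ ≤ k + ∑ i, (I i \ S).ncard := add_le_add hF (Finset.set_ncard_biUnion_le _ _)
  have := card_mul_le_ncard_crossingEdges_mul_two hG
    (π := (fromEdgeSet S).connectedComponentMk) Quot.mk_surjective
  lia

theorem exists_disjoint_connected_le_deleteEdges [Nonempty V]
    (hG : G.IsEdgeConnected (2 * k)) {F : Set (Sym2 V)} (hF : F.ncard ≤ k) :
    ∃ T : Fin k → SimpleGraph V, Pairwise (Disjoint on T) ∧
      ∀ i, T i ≤ G.deleteEdges F ∧ (T i).Connected := by
  obtain ⟨I, S, h_disj, h_sub, h_indep, h_cover, hS⟩ :=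
    exists_disjoint_linearIndepOn (ZMod 2) (Fin k) edgeBoundary (G.edgeSet \ F).toFinite
  have sum_card_le : ∑ i, Nat.card (fromEdgeSet (I i)).ConnectedComponent ≤ k := by
    have h_sum := Finset.sum_le_sum fun i (_ : i ∈ Finset.univ) ↦
      card_connectedComponent_add_ncard_sdiff_le (h_indep i) fun e he ↦ hS e he i
    rw [Finset.sum_add_distrib, Finset.sum_const, Finset.card_fin, smul_eq_mul] at h_sum
    have := mul_card_connectedComponent_le hG hF h_cover
    lia
  have card_le_one (i : Fin k) : Nat.card (fromEdgeSet (I i)).ConnectedComponent ≤ 1 := by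
    by_contra! h_two
    have := Finset.sum_lt_sum (s := Finset.univ) (f := fun _ : Fin k ↦ 1)
      (fun j _ ↦ Nat.card_pos (α := (fromEdgeSet (I j)).ConnectedComponent))
      ⟨i, Finset.mem_univ i, h_two⟩
    simp only [Finset.sum_const, Finset.card_fin, smul_eq_mul, mul_one] at this
    lia
  refine ⟨fun i ↦ fromEdgeSet (I i), fun i j hij ↦ ?_, fun i ↦ ⟨?_, ?_⟩⟩
  · rw [onFun, disjoint_fromEdgeSet]
    exact (h_disj hij).mono_left (by simp)
  · rw [fromEdgeSet_le, edgeSet_deleteEdges]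
    exact Set.sdiff_subset.trans (h_sub i)
  · exact connected_of_card_connectedComponent_le_one (card_le_one i)

end TreePacking

section Flow

variable {V : Type*} {G : SimpleGraph V}

theorem finsum_incidenceSet_eq_linearCombination_edgeBoundary {a : Sym2 V →₀ ZMod 2}
    (ha : ↑a.support ⊆ G.edgeSet) (v : V) :
    ∑ᶠ e ∈ G.incidenceSet v, a e = Finsupp.linearCombination (ZMod 2) edgeBoundary a v := by
  classical
  have h_inter : G.incidenceSet v ∩ support a =
      ↑{e ∈ a.support | v ∈ e} ∩ support a := by
    ext e
    have : a e ≠ 0 → e ∈ G.edgeSet := fun h ↦ ha (Finsupp.mem_support_iff.2 h)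
    simp only [incidenceSet, Set.mem_inter_iff, Set.mem_ofPred_eq, Finset.coe_filter,
      Finsupp.mem_support_iff]
    tauto
  rw [finsum_mem_eq_sum_of_inter_support_eq a h_inter, Finset.sum_filter,
    Finsupp.linearCombination_apply, Finsupp.sum, Finsupp.finsetSum_apply]
  refine Finset.sum_congr rfl fun e he ↦ ?_
  simp [edgeBoundary_apply (G.not_isDiag_of_mem_edgeSet (ha he))]

theorem exists_flow_eq_of_notMem [Finite V] {T : SimpleGraph V} (hTG : T ≤ G)
    (hT : T.Preconnected) (a₀ : Sym2 V → ZMod 2) :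
    ∃ a : Sym2 V → ZMod 2, (∀ e ∈ G.edgeSet, e ∉ T.edgeSet → a e = a₀ e) ∧
      ∀ v, ∑ᶠ e ∈ G.incidenceSet v, a e = 0 := by
  classical
  let b : Sym2 V →₀ ZMod 2 :=
    Finsupp.equivFunOnFinite.symm ((G.edgeSet \ T.edgeSet).indicator a₀)
  have hb : ↑b.support ⊆ G.edgeSet \ T.edgeSet := by
    simp [b]
  have h_mem : Finsupp.linearCombination (ZMod 2) edgeBoundary b ∈
      span (ZMod 2) (edgeBoundary '' T.edgeSet) := by
    refine sum_mem fun e _ ↦ smul_mem _ _ ?_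
    induction e using Sym2.ind with | _ u w
    exact edgeBoundary_mem_span_of_reachable (by simpa using hT u w)
  obtain ⟨l, hl, hlb⟩ := (Finsupp.mem_span_image_iff_linearCombination (ZMod 2)).1 h_mem
  refine ⟨⇑(b + l), fun e heG heT ↦ ?_, fun v ↦ ?_⟩
  · have : l e = 0 := Finsupp.notMem_support_iff.1 fun he ↦ heT (hl he)
    simp [this, b, heG, heT]
  · have h_support : ↑(b + l).support ⊆ G.edgeSet := fun e he ↦
      (Finset.mem_union.1 (Finsupp.support_add he)).elim (fun h ↦ (hb h).1)
        fun h ↦ edgeSet_mono hTG (hl h)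
    rw [finsum_incidenceSet_eq_linearCombination_edgeBoundary h_support, map_add, hlb,
      ZModModule.add_self, Finsupp.zero_apply]

theorem isNowhereZeroFlow_prodMk [Finite V] {M N : Type*} [AddCommMonoid M] [AddCommMonoid N]
    {a : Sym2 V → M} {b : Sym2 V → N} (ha : ∀ v, ∑ᶠ e ∈ G.incidenceSet v, a e = 0)
    (hb : ∀ v, ∑ᶠ e ∈ G.incidenceSet v, b e = 0) (hab : ∀ e ∈ G.edgeSet, a e ≠ 0 ∨ b e ≠ 0) :
    IsNowhereZeroFlow G fun e ↦ (a e, b e) := by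
  refine ⟨fun e he h ↦ ?_, fun v ↦ ?_⟩
  · obtain ⟨h_fst, h_snd⟩ := Prod.mk_eq_zero.1 h
    exact (hab e he).elim (· h_fst) (· h_snd)
  · have h_fin := (G.incidenceSet v).toFinite
    refine Prod.ext ?_ ?_
    · exact ((AddMonoidHom.fst M N).map_finsum_mem _ h_fin).trans (ha v)
    · exact ((AddMonoidHom.snd M N).map_finsum_mem _ h_fin).trans (hb v)

theorem exists_isNowhereZeroFlow_of_disjoint [Finite V] {T₁ T₂ : SimpleGraph V}
    {F : Set (Sym2 V)} {e : Sym2 V} (hT : Disjoint T₁ T₂) (hT₁ : T₁ ≤ G.deleteEdges F)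
    (hT₂ : T₂ ≤ G.deleteEdges F) (hT₁_conn : T₁.Preconnected) (hT₂_conn : T₂.Preconnected)
    (hFG : F ⊆ G.edgeSet) (heG : e ∈ G.edgeSet) (heF : e ∉ F) (heT₁ : e ∉ T₁.edgeSet) :
    ∃ θ : Sym2 V → ZMod 2 × ZMod 2, IsNowhereZeroFlow G θ ∧ ∀ f ∈ F, θ e ≠ θ f := by
  classical
  have notMem_F {T : SimpleGraph V} (hTG : T ≤ G.deleteEdges F) {x} (hx : x ∈ T.edgeSet) :
      x ∉ F := (edgeSet_deleteEdges F ▸ edgeSet_mono hTG hx).2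
  obtain ⟨a, ha, ha_flow⟩ := exists_flow_eq_of_notMem (hT₁.trans (deleteEdges_le F)) hT₁_conn
    fun x ↦ if x ∈ F then 0 else 1
  obtain ⟨b, hb, hb_flow⟩ := exists_flow_eq_of_notMem (hT₂.trans (deleteEdges_le F)) hT₂_conn
    fun _ ↦ 1
  refine ⟨fun x ↦ (a x, b x), isNowhereZeroFlow_prodMk ha_flow hb_flow fun x hx ↦ ?_,
    fun f hf h_eq ↦ ?_⟩
  · by_cases hxT₂ : x ∈ T₂.edgeSet
    · have hxT₁ : x ∉ T₁.edgeSet := (disjoint_edgeSet.2 hT).notMem_of_mem_right hxT₂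
      exact .inl (by simp [ha x hx hxT₁, notMem_F hT₂ hxT₂])
    · exact .inr (by simp [hb x hx hxT₂])
  · have ha_e : a e = 1 := by simp [ha e heG heT₁, heF]
    have ha_f : a f = 0 := by simp [ha f (hFG hf) fun h ↦ notMem_F hT₁ h hf, hf]
    simp [ha_e, ha_f] at h_eq

end Flow

theorem stmt_1_general {V : Type*} [Finite V] {G : SimpleGraph V} (hG : EdgeConnGe G 4)
    {e f g : G.edgeSet} (hef : e ≠ f) (heg : e ≠ g) :
    ∃ θ : Sym2 V → ZMod 2 × ZMod 2, IsNowhereZeroFlow G θ ∧ θ e ≠ θ f ∧ θ e ≠ θ g := by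
  have := hG.1.nonempty
  obtain ⟨T, hT_disj, hT⟩ := exists_disjoint_connected_le_deleteEdges (k := 2)
    hG.isEdgeConnected (F := {↑f, ↑g}) 
    ((Set.ncard_insert_le _ _).trans (by simp))
  obtain ⟨i, j, hij, hei⟩ : ∃ i j, i ≠ j ∧ ↑e ∉ (T i).edgeSet := by
    by_cases he : ↑e ∈ (T 0).edgeSet
    · exact ⟨1, 0, by simp, (disjoint_edgeSet.2 (hT_disj zero_ne_one)).notMem_of_mem_left he⟩
    · exact ⟨0, 1, by simp, he⟩
  obtain ⟨θ, hθ, hθe⟩ := exists_isNowhereZeroFlow_of_disjoint (hT_disj hij) (hT i).1 (hT j).1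
    (hT i).2.preconnected (hT j).2.preconnected (by simp [Set.insert_subset_iff]) e.2
    (by simp [Subtype.coe_inj, hef, heg]) hei
  exact ⟨θ, hθ, hθe f (by simp), hθe g (by simp)⟩

theorem stmt_1 {V : Type*} [Fintype V] (G : SimpleGraph V)
    (hG : EdgeConnGe G 4) (v : V) (e f g : Sym2 V)
    (he : e ∈ G.incidenceSet v) (hf : f ∈ G.incidenceSet v) (hg : g ∈ G.incidenceSet v)
    (hef : e ≠ f) (heg : e ≠ g) (hfg : f ≠ g) :
    ∃ θ : Sym2 V → ZMod 2 × ZMod 2, IsNowhereZeroFlow G θ ∧ θ e ≠ θ f ∧ θ e ≠ θ g :=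
  stmt_1_general hG (e := ⟨e, he.1⟩) (f := ⟨f, hf.1⟩) (g := ⟨g, hg.1⟩)
    (Subtype.coe_ne_coe.1 hef) (Subtype.coe_ne_coe.1 heg)
end

section
/- Let G be a finite simple cubic graph containing the graph K as a subgraph, i.e., there exist five pairwise distinct vertices v1, v2, v3, v4, v5 of G such that v1v2, v1v3, v2v4, v2v5, v3v4, v3v5, v4v5 are all edges of G. Then in any normal edge-coloring of G, these seven edges receive pairwise different colors. -/
open SimpleGraph

/-!
If the ends of an edge `uv` share a color other than that of `uv` itself, then at most four colors
appear around `uv`. In a normal coloring of a cubic graph `uv` is then poor, so the remaining colors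
at `u` and `v` agree as well. Applied to the edges joining `{v₂, v₃}` to `{v₄, v₅}`, this turns a
coincidence of colors between two disjoint edges of `K` into one between two adjacent edges.
-/

section Sets

variable {α : Type*} {A B : Set α}

lemma eq_of_ncard_eq_ncard_union (hfin : (A ∪ B).Finite) (hA : A.ncard = (A ∪ B).ncard)
    (hB : B.ncard = (A ∪ B).ncard) : A = B :=
  calc
    A = A ∪ B := Set.eq_of_subset_of_ncard_le Set.subset_union_left hA.ge hfin
    _ = B := (Set.eq_of_subset_of_ncard_le Set.subset_union_right hB.ge hfin).symm

lemma ncard_union_le_four_of_mem_inter (hA : A.ncard = 3) (hB : B.ncard = 3) {a b : α}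
    (ha : a ∈ A ∩ B) (hb : b ∈ A ∩ B) (hab : a ≠ b) : (A ∪ B).ncard ≤ 4 := by
  have hfinA : A.Finite := Set.finite_of_ncard_ne_zero (by simp [hA])
  have hfinB : B.Finite := Set.finite_of_ncard_ne_zero (by simp [hB])
  have hinter : 1 < (A ∩ B).ncard :=
    (Set.one_lt_ncard (hfinA.inter_of_left B)).2 ⟨a, ha, b, hb, hab⟩
  have hsum := Set.ncard_union_add_ncard_inter A B hfinA hfinB
  lia

lemma eq_of_mem_of_ncard_eq_three (hA : A.ncard = 3) {a b p q : α} (ha : a ∈ A) (hb : b ∈ A)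
    (hab : a ≠ b) (hp : p ∈ A) (hpa : p ≠ a) (hpb : p ≠ b) (hq : q ∈ A) (hqa : q ≠ a)
    (hqb : q ≠ b) : p = q := by
  obtain ⟨x, y, z, -, -, -, rfl⟩ := Set.ncard_eq_three.1 hA
  grind

end Sets

section Coloring

variable {V C : Type*} {G : SimpleGraph V} {c : Sym2 V → C} {t u v w x y z : V}

lemma color_mem_colorSet_left (c : Sym2 V → C) (h : G.Adj u v) : c s(u, v) ∈ colorSet G c u :=
  Set.mem_image_of_mem c (G.mk'_mem_incidenceSet_left_iff.2 h)

lemma color_mem_colorSet_right (c : Sym2 V → C) (h : G.Adj u v) : c s(u, v) ∈ colorSet G c v :=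
  Set.mem_image_of_mem c (G.mk'_mem_incidenceSet_right_iff.2 h)

namespace IsProperEdgeColoring

lemma injOn_incidenceSet (hc : IsProperEdgeColoring G c) (v : V) :
    Set.InjOn c (G.incidenceSet v) := fun e he f hf hef ↦
  by_contra fun hne ↦ hc e he.1 f hf.1 hne ⟨v, he.2, hf.2⟩ hef

lemma ncard_colorSet (hc : IsProperEdgeColoring G c) (v : V) :
    (colorSet G c v).ncard = (G.neighborSet v).ncard := by
  classical
  calc
    (colorSet G c v).ncard = (G.incidenceSet v).ncard := (hc.injOn_incidenceSet v).ncard_image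
    _ = (G.neighborSet v).ncard := Set.ncard_congr' (G.incidenceSetEquivNeighborSet v)

lemma ncard_colorSet_eq_three (hc : IsProperEdgeColoring G c) (hG : IsCubic G) (v : V) :
    (colorSet G c v).ncard = 3 :=
  (hc.ncard_colorSet v).trans (hG v)

lemma color_ne (hc : IsProperEdgeColoring G c) (hx : G.Adj v x) (hy : G.Adj v y) (hxy : x ≠ y) :
    c s(v, x) ≠ c s(v, y) :=
  hc _ hx _ hy (Sym2.congr_right.not.2 hxy) ⟨v, Sym2.mem_mk_left v x, Sym2.mem_mk_left v y⟩

lemma colorSet_eq_of_isPoorAt (hc : IsProperEdgeColoring G c) (hG : IsCubic G)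
    (h : IsPoorAt G c u v) : colorSet G c u = colorSet G c v := by
  have hunion : (colorSet G c u ∪ colorSet G c v).ncard = 3 := h
  refine eq_of_ncard_eq_ncard_union (Set.finite_of_ncard_ne_zero (by simp [hunion])) ?_ ?_
  · rw [hunion, hc.ncard_colorSet_eq_three hG]
  · rw [hunion, hc.ncard_colorSet_eq_three hG]

end IsProperEdgeColoring

namespace IsNormalEdgeColoring

lemma isPoorAt_of_color_eq (hc : IsNormalEdgeColoring G c) (hG : IsCubic G) (huv : G.Adj u v)
    (hx : G.Adj u x) (hz : G.Adj v z) (hxv : x ≠ v) (h : c s(u, x) = c s(v, z)) :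
    IsPoorAt G c u v := by
  refine (hc.2 u v huv).resolve_right fun hrich ↦ ?_
  rw [IsRichAt] at hrich
  have hle : (colorSet G c u ∪ colorSet G c v).ncard ≤ 4 :=
    ncard_union_le_four_of_mem_inter (hc.1.ncard_colorSet_eq_three hG u)
      (hc.1.ncard_colorSet_eq_three hG v)
      ⟨color_mem_colorSet_left c hx, h ▸ color_mem_colorSet_left c hz⟩
      ⟨color_mem_colorSet_left c huv, color_mem_colorSet_right c huv⟩ (hc.1.color_ne hx huv hxv)
  lia

lemma other_color_eq_of_color_eq (hc : IsNormalEdgeColoring G c) (hG : IsCubic G) (huv : G.Adj u v)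
    (hx : G.Adj u x) (hy : G.Adj u y) (hz : G.Adj v z) (hw : G.Adj v w)
    (hxv : x ≠ v) (hyv : y ≠ v) (hxy : x ≠ y) (hwu : w ≠ u) (hzw : z ≠ w)
    (h : c s(u, x) = c s(v, z)) : c s(u, y) = c s(v, w) := by
  have hset : colorSet G c u = colorSet G c v :=
    hc.1.colorSet_eq_of_isPoorAt hG (hc.isPoorAt_of_color_eq hG huv hx hz hxv h)
  refine eq_of_mem_of_ncard_eq_three (hc.1.ncard_colorSet_eq_three hG u)
    (color_mem_colorSet_left c huv) (color_mem_colorSet_left c hx) (hc.1.color_ne huv hx hxv.symm)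
    (color_mem_colorSet_left c hy) (hc.1.color_ne hy huv hyv) (hc.1.color_ne hy hx hxy.symm)
    (hset ▸ color_mem_colorSet_left c hw) ?_ ?_
  · rw [Sym2.eq_swap (a := u)]
    exact hc.1.color_ne hw huv.symm hwu
  · rw [h]
    exact hc.1.color_ne hw hz hzw.symm

lemma color_ne_of_triangle (hc : IsNormalEdgeColoring G c) (hG : IsCubic G) (huv : G.Adj u v)
    (hut : G.Adj u t) (hvt : G.Adj v t) (hx : G.Adj u x) (hz : G.Adj v z)
    (hxv : x ≠ v) (hxt : x ≠ t) (hzt : z ≠ t) : c s(u, x) ≠ c s(v, z) := by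
  intro h
  have hcolor : c s(u, t) = c s(v, t) :=
    hc.other_color_eq_of_color_eq hG huv hx hut hz hvt hxv hvt.ne' hxt hut.ne' hzt h
  rw [Sym2.eq_swap (a := u), Sym2.eq_swap (a := v)] at hcolor
  exact hc.1.color_ne hut.symm hvt.symm huv.ne hcolor

lemma color_eq_iff_of_triangle (hc : IsNormalEdgeColoring G c) (hG : IsCubic G) (huv : G.Adj u v)
    (hut : G.Adj u t) (hvt : G.Adj v t) (hx : G.Adj u x) (hz : G.Adj v z)
    (hxv : x ≠ v) (hxt : x ≠ t) (hzu : z ≠ u) (hzt : z ≠ t) :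
    c s(u, t) = c s(v, z) ↔ c s(u, x) = c s(v, t) where
  mp := hc.other_color_eq_of_color_eq hG huv hut hx hz hvt hvt.ne' hxv hxt.symm hut.ne' hzt
  mpr := hc.other_color_eq_of_color_eq hG huv hx hut hvt hz hxv hvt.ne' hxt hzu hzt.symm

end IsNormalEdgeColoring

end Coloring

/-- The seven edges of the copy of `K` on `v₁, …, v₅`. -/
def subdividedK4Edges {V : Type*} (v₁ v₂ v₃ v₄ v₅ : V) : Set (Sym2 V) :=
  {s(v₁, v₂), s(v₁, v₃), s(v₂, v₄), s(v₂, v₅), s(v₃, v₄), s(v₃, v₅), s(v₄, v₅)}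

/-- `v₁, …, v₅` span a copy of the graph `K`, i.e. of `K₄` with one edge subdivided by `v₁`, as a
(not necessarily induced) subgraph of `G`. -/
structure IsSubdividedK4 {V : Type*} (G : SimpleGraph V) (v₁ v₂ v₃ v₄ v₅ : V) : Prop where
  nodup : [v₁, v₂, v₃, v₄, v₅].Nodup
  adj₁₂ : G.Adj v₁ v₂
  adj₁₃ : G.Adj v₁ v₃
  adj₂₄ : G.Adj v₂ v₄
  adj₂₅ : G.Adj v₂ v₅
  adj₃₄ : G.Adj v₃ v₄
  adj₃₅ : G.Adj v₃ v₅
  adj₄₅ : G.Adj v₄ v₅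

namespace IsSubdividedK4

variable {V C : Type*} {G : SimpleGraph V} {c : Sym2 V → C} {v₁ v₂ v₃ v₄ v₅ : V}

lemma swap₂₃ (hK : IsSubdividedK4 G v₁ v₂ v₃ v₄ v₅) : IsSubdividedK4 G v₁ v₃ v₂ v₄ v₅ where
  nodup := by grind [hK.nodup]
  adj₁₂ := hK.adj₁₃
  adj₁₃ := hK.adj₁₂
  adj₂₄ := hK.adj₃₄
  adj₂₅ := hK.adj₃₅
  adj₃₄ := hK.adj₂₄
  adj₃₅ := hK.adj₂₅
  adj₄₅ := hK.adj₄₅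

lemma swap₄₅ (hK : IsSubdividedK4 G v₁ v₂ v₃ v₄ v₅) : IsSubdividedK4 G v₁ v₂ v₃ v₅ v₄ where
  nodup := by grind [hK.nodup]
  adj₁₂ := hK.adj₁₂
  adj₁₃ := hK.adj₁₃
  adj₂₄ := hK.adj₂₅
  adj₂₅ := hK.adj₂₄
  adj₃₄ := hK.adj₃₅
  adj₃₅ := hK.adj₃₄
  adj₄₅ := hK.adj₄₅.symm

lemma color₁₂_ne_color₃₄ (hK : IsSubdividedK4 G v₁ v₂ v₃ v₄ v₅) (hG : IsCubic G)
    (hc : IsNormalEdgeColoring G c) : c s(v₁, v₂) ≠ c s(v₃, v₄) := by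
  have hdist := hK.nodup
  rw [Sym2.eq_swap (a := v₁), Sym2.eq_swap (a := v₃)]
  apply hc.color_ne_of_triangle hG hK.adj₂₄ hK.adj₂₅ hK.adj₄₅ hK.adj₁₂.symm hK.adj₃₄.symm <;> grind

lemma color₂₄_ne_color₃₅ (hK : IsSubdividedK4 G v₁ v₂ v₃ v₄ v₅) (hG : IsCubic G)
    (hc : IsNormalEdgeColoring G c) : c s(v₂, v₄) ≠ c s(v₃, v₅) := by
  intro h
  have hdist := hK.nodup
  have h₁₂ : c s(v₂, v₁) = c s(v₅, v₄) := by
    refine (hc.color_eq_iff_of_triangle hG hK.adj₂₅ hK.adj₂₄ hK.adj₄₅.symm hK.adj₁₂.symm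
      hK.adj₃₅.symm ?_ ?_ ?_ ?_).1 (h.trans (by rw [Sym2.eq_swap])) <;> grind
  have h₁₃ : c s(v₃, v₁) = c s(v₄, v₅) := by
    refine (hc.color_eq_iff_of_triangle hG hK.adj₃₄ hK.adj₃₅ hK.adj₄₅ hK.adj₁₃.symm
      hK.adj₂₄.symm ?_ ?_ ?_ ?_).1 (h.symm.trans (by rw [Sym2.eq_swap])) <;> grind
  have h₁₂_₁₃ : c s(v₁, v₂) = c s(v₁, v₃) := by
    rw [Sym2.eq_swap, h₁₂, Sym2.eq_swap, ← h₁₃, Sym2.eq_swap]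
  exact hc.1.color_ne hK.adj₁₂ hK.adj₁₃ (by grind) h₁₂_₁₃

lemma color₁₂_ne_color₄₅ (hK : IsSubdividedK4 G v₁ v₂ v₃ v₄ v₅) (hG : IsCubic G)
    (hc : IsNormalEdgeColoring G c) : c s(v₁, v₂) ≠ c s(v₄, v₅) := by
  intro h
  have hdist := hK.nodup
  rw [Sym2.eq_swap (a := v₁)] at h
  have h₂₅ : c s(v₂, v₅) = c s(v₄, v₃) := by
    refine (hc.color_eq_iff_of_triangle hG hK.adj₂₄ hK.adj₂₅ hK.adj₄₅ hK.adj₁₂.symm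
      hK.adj₃₄.symm ?_ ?_ ?_ ?_).2 h <;> grind
  exact hK.swap₄₅.color₂₄_ne_color₃₅ hG hc (h₂₅.trans (by rw [Sym2.eq_swap]))

lemma edges_subset_edgeSet (hK : IsSubdividedK4 G v₁ v₂ v₃ v₄ v₅) :
    subdividedK4Edges v₁ v₂ v₃ v₄ v₅ ⊆ G.edgeSet := by
  simp [subdividedK4Edges, Set.insert_subset_iff, hK.adj₁₂, hK.adj₁₃, hK.adj₂₄, hK.adj₂₅,
    hK.adj₃₄, hK.adj₃₅, hK.adj₄₅]

lemma color_ne_of_disjoint (hK : IsSubdividedK4 G v₁ v₂ v₃ v₄ v₅) (hG : IsCubic G)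
    (hc : IsNormalEdgeColoring G c) {e f : Sym2 V}
    (he : e ∈ subdividedK4Edges v₁ v₂ v₃ v₄ v₅) (hf : f ∈ subdividedK4Edges v₁ v₂ v₃ v₄ v₅)
    (hdisj : ∀ v ∈ e, v ∉ f) : c e ≠ c f := by
  have h₁₂_₃₄ := hK.color₁₂_ne_color₃₄ hG hc
  have h₁₃_₂₄ := hK.swap₂₃.color₁₂_ne_color₃₄ hG hc
  have h₁₂_₃₅ := hK.swap₄₅.color₁₂_ne_color₃₄ hG hc
  have h₁₃_₂₅ := hK.swap₂₃.swap₄₅.color₁₂_ne_color₃₄ hG hc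
  have h₁₂_₄₅ := hK.color₁₂_ne_color₄₅ hG hc
  have h₁₃_₄₅ := hK.swap₂₃.color₁₂_ne_color₄₅ hG hc
  have h₂₄_₃₅ := hK.color₂₄_ne_color₃₅ hG hc
  have h₃₄_₂₅ := hK.swap₂₃.color₂₄_ne_color₃₅ hG hc
  simp only [subdividedK4Edges, Set.mem_insert_iff, Set.mem_singleton_iff] at he hf
  rcases he with rfl | rfl | rfl | rfl | rfl | rfl | rfl <;>
    rcases hf with rfl | rfl | rfl | rfl | rfl | rfl | rfl <;>
    first | assumption | exact Ne.symm ‹_› | simp at hdisj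

end IsSubdividedK4

theorem stmt_5_general {V C : Type*} {G : SimpleGraph V} (hG : IsCubic G) {v₁ v₂ v₃ v₄ v₅ : V}
    (hK : IsSubdividedK4 G v₁ v₂ v₃ v₄ v₅) {c : Sym2 V → C} (hc : IsNormalEdgeColoring G c) :
    Set.InjOn c (subdividedK4Edges v₁ v₂ v₃ v₄ v₅) := by
  intro e he f hf hcolor
  by_contra hne
  by_cases hshare : ∃ v, v ∈ e ∧ v ∈ f
  · exact hc.1 e (hK.edges_subset_edgeSet he) f (hK.edges_subset_edgeSet hf) hne hshare hcolor
  · exact hK.color_ne_of_disjoint hG hc he hf (fun v hve hvf ↦ hshare ⟨v, hve, hvf⟩) hcolor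

theorem stmt_5 {V : Type*} [Fintype V] (G : SimpleGraph V) (hG : IsCubic G)
    (v₁ v₂ v₃ v₄ v₅ : V) (hdist : ([v₁, v₂, v₃, v₄, v₅] : List V).Nodup)
    (h12 : G.Adj v₁ v₂) (h13 : G.Adj v₁ v₃) (h24 : G.Adj v₂ v₄) (h25 : G.Adj v₂ v₅)
    (h34 : G.Adj v₃ v₄) (h35 : G.Adj v₃ v₅) (h45 : G.Adj v₄ v₅)
    {C : Type*} (c : Sym2 V → C) (hc : IsNormalEdgeColoring G c) :
    ∀ e ∈ ({s(v₁, v₂), s(v₁, v₃), s(v₂, v₄), s(v₂, v₅), s(v₃, v₄), s(v₃, v₅), s(v₄, v₅)} :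
        Set (Sym2 V)),
      ∀ f ∈ ({s(v₁, v₂), s(v₁, v₃), s(v₂, v₄), s(v₂, v₅), s(v₃, v₄), s(v₃, v₅), s(v₄, v₅)} :
        Set (Sym2 V)), e ≠ f → c e ≠ c f :=
  fun _ he _ hf hef hcolor ↦
    hef (stmt_5_general hG ⟨hdist, h12, h13, h24, h25, h34, h35, h45⟩ hc he hf hcolor)
end

section
/- Let G be a finite simple cubic graph containing the graph K as a subgraph, i.e., there exist five pairwise distinct vertices v1, v2, v3, v4, v5 of G such that v1v2, v1v3, v2v4, v2v5, v3v4, v3v5, v4v5 are all edges of G, and let w be the third neighbor of v1 in G (so w ∉ {v2, v3, v4, v5}). Then in any normal 7-edge-coloring c of G, the color of the edge v4v5 equals the color of the edge v1w. -/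
open SimpleGraph

/-!
If the edges around `uv` other than `uv` itself are `uy`, `uz` and `vs`, `vt`, then normality forces
`c(uz) = c(vt)` as soon as `c(uy) = c(vs)`, because otherwise exactly four colors would appear
around `uv`. Applied to the edges of `K`, this rule and properness exclude every coincidence of
colors among the seven edges of `K` and `v₁w` except `c(v₄v₅) = c(v₁w)`. Without the latter the
eight edges would need eight colors.
-/

section NeighborTriple

variable {V C : Type*} {G : SimpleGraph V} {c : Sym2 V → C} {u v x y z s t : V}

/-- The vertex `v` has degree three, with neighbors `x`, `y` and `z`. -/
structure IsNeighborTriple (G : SimpleGraph V) (v x y z : V) : Prop where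
  neighborSet_eq : G.neighborSet v = {x, y, z}
  nodup : [x, y, z].Nodup

theorem IsNeighborTriple.swap_left (h : IsNeighborTriple G v x y z) :
    IsNeighborTriple G v y x z :=
  ⟨h.neighborSet_eq.trans (Set.insert_comm x y {z}), (List.Perm.swap y x [z]).nodup h.nodup⟩

theorem IsNeighborTriple.swap_right (h : IsNeighborTriple G v x y z) :
    IsNeighborTriple G v x z y :=
  ⟨h.neighborSet_eq.trans (congrArg (insert x) (Set.pair_comm y z)),
    ((List.Perm.swap z y []).cons x).nodup h.nodup⟩

theorem IsNeighborTriple.adj_left (h : IsNeighborTriple G v x y z) : G.Adj v x := by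
  simp [← mem_neighborSet, h.neighborSet_eq]

theorem IsNeighborTriple.of_ncard_neighborSet (hv : (G.neighborSet v).ncard = 3)
    (hx : G.Adj v x) (hy : G.Adj v y) (hz : G.Adj v z) (hxy : x ≠ y) (hxz : x ≠ z)
    (hyz : y ≠ z) : IsNeighborTriple G v x y z where
  neighborSet_eq := by
    have hsub : {x, y, z} ⊆ G.neighborSet v := by
      rintro _ (rfl | rfl | rfl) <;> assumption
    have hcard : ({x, y, z} : Set V).ncard = 3 :=
      Set.ncard_eq_three.mpr ⟨x, y, z, hxy, hxz, hyz, rfl⟩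
    have hfin : (G.neighborSet v).Finite := Set.finite_of_ncard_ne_zero (by simp [hv])
    exact (Set.eq_of_subset_of_ncard_le hsub (by rw [hcard, hv]) hfin).symm
  nodup := by simp [hxy, hxz, hyz]

theorem incidenceSet_eq_image_neighborSet (G : SimpleGraph V) (v : V) :
    G.incidenceSet v = (fun u ↦ s(v, u)) '' G.neighborSet v := by
  ext e
  constructor
  · rintro ⟨he, hv⟩
    obtain ⟨u, rfl⟩ := Sym2.mem_iff_exists.mp hv
    exact ⟨u, he, rfl⟩
  · rintro ⟨u, hu, rfl⟩
    exact ⟨hu, Sym2.mem_mk_left v u⟩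

theorem IsNeighborTriple.colorSet_eq (h : IsNeighborTriple G v x y z) (c : Sym2 V → C) :
    colorSet G c v = {c s(v, x), c s(v, y), c s(v, z)} := by
  simp only [colorSet, incidenceSet_eq_image_neighborSet, h.neighborSet_eq,
    Set.image_insert_eq, Set.image_singleton]

theorem IsProperEdgeColoring.color_ne_s7 (hc : IsProperEdgeColoring G c) (hx : G.Adj v x)
    (hy : G.Adj v y) (hxy : x ≠ y) : c s(v, x) ≠ c s(v, y) :=
  hc _ hx _ hy (fun h ↦ hxy (Sym2.congr_right.mp h))
    ⟨v, Sym2.mem_mk_left v x, Sym2.mem_mk_left v y⟩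

theorem IsProperEdgeColoring.nodup_colors (hc : IsProperEdgeColoring G c)
    (h : IsNeighborTriple G v x y z) : [c s(v, x), c s(v, y), c s(v, z)].Nodup := by
  have hx := h.adj_left
  have hy := h.swap_left.adj_left
  have hz := h.swap_right.swap_left.adj_left
  have hne := h.nodup
  simp only [List.nodup_cons, List.mem_cons, List.not_mem_nil, not_or, or_false] at hne
  obtain ⟨⟨hxy, hxz⟩, hyz, -⟩ := hne
  simp [hc.color_ne_s7 hx hy hxy, hc.color_ne_s7 hx hz hxz, hc.color_ne_s7 hy hz hyz]

theorem IsNormalEdgeColoring.color_eq_of_color_eq (hc : IsNormalEdgeColoring G c)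
    (hu : IsNeighborTriple G u v y z) (hv : IsNeighborTriple G v u s t)
    (h : c s(u, y) = c s(v, s)) : c s(u, z) = c s(v, t) := by
  classical
  by_contra hzt
  have hnodup : [c s(u, v), c s(u, y), c s(u, z), c s(v, t)].Nodup := by
    have hcu := hc.1.nodup_colors hu
    have hcv := hc.1.nodup_colors hv
    rw [Sym2.eq_swap, ← h] at hcv
    grind
  have hunion : colorSet G c u ∪ colorSet G c v =
      ([c s(u, v), c s(u, y), c s(u, z), c s(v, t)].toFinset : Set C) := by
    rw [hu.colorSet_eq, hv.colorSet_eq, Sym2.eq_swap (a := v) (b := u), ← h]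
    ext k
    simp only [Set.mem_union, Set.mem_insert_iff, Set.mem_singleton_iff, List.coe_toFinset,
      Set.mem_ofPred_eq, List.mem_cons, List.not_mem_nil, or_false]
    tauto
  have hfour : (colorSet G c u ∪ colorSet G c v).ncard = 4 := by
    rw [hunion, Set.ncard_coe_finset, List.toFinset_card_of_nodup hnodup]
    rfl
  rcases hc.2 u v hu.adj_left with hpoor | hrich
  · exact absurd (hfour.symm.trans hpoor) (by decide)
  · exact absurd (hfour.symm.trans hrich) (by decide)

theorem IsNormalEdgeColoring.color_ne_of_triangle_s7 (hc : IsNormalEdgeColoring G c)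
    (hu : IsNeighborTriple G u v x y) (hv : IsNeighborTriple G v u x z) :
    c s(u, y) ≠ c s(v, z) := by
  intro h
  have hux : c s(u, x) = c s(v, x) := hc.color_eq_of_color_eq hu.swap_right hv.swap_right h
  rw [Sym2.eq_swap, Sym2.eq_swap (a := v)] at hux
  exact hc.1.color_ne_s7 hu.swap_left.adj_left.symm hv.swap_left.adj_left.symm hu.adj_left.ne hux

end NeighborTriple

/-- The vertices `v₁, …, v₅` span a copy of the graph `K` all of whose vertices have degree three
in `G`, and `w` is the third neighbor of `v₁`. The copy is encoded by the neighborhoods of its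
vertices. -/
structure IsPendantK {V : Type*} (G : SimpleGraph V) (w v₁ v₂ v₃ v₄ v₅ : V) : Prop where
  nbrs₁ : IsNeighborTriple G v₁ w v₂ v₃
  nbrs₂ : IsNeighborTriple G v₂ v₁ v₄ v₅
  nbrs₃ : IsNeighborTriple G v₃ v₁ v₄ v₅
  nbrs₄ : IsNeighborTriple G v₄ v₂ v₃ v₅
  nbrs₅ : IsNeighborTriple G v₅ v₂ v₃ v₄

namespace IsPendantK

variable {V C : Type*} {G : SimpleGraph V} {c : Sym2 V → C} {w v₁ v₂ v₃ v₄ v₅ : V}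

theorem swap₂₃ (hK : IsPendantK G w v₁ v₂ v₃ v₄ v₅) : IsPendantK G w v₁ v₃ v₂ v₄ v₅ :=
  ⟨hK.nbrs₁.swap_right, hK.nbrs₃, hK.nbrs₂, hK.nbrs₄.swap_left, hK.nbrs₅.swap_left⟩

theorem swap₄₅ (hK : IsPendantK G w v₁ v₂ v₃ v₄ v₅) : IsPendantK G w v₁ v₂ v₃ v₅ v₄ :=
  ⟨hK.nbrs₁, hK.nbrs₂.swap_right, hK.nbrs₃.swap_right, hK.nbrs₅, hK.nbrs₄⟩

theorem color₁₂_ne_color₃₄ (hK : IsPendantK G w v₁ v₂ v₃ v₄ v₅)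
    (hc : IsNormalEdgeColoring G c) : c s(v₁, v₂) ≠ c s(v₃, v₄) := by
  rw [Sym2.eq_swap, Sym2.eq_swap (a := v₃)]
  exact hc.color_ne_of_triangle_s7 hK.nbrs₂.swap_left.swap_right hK.nbrs₄.swap_right

/-- A color common to `v₁v₂` and `v₄v₅` makes `v₂v₅` poor, hence `v₃v₄` poor, and so appears on
`v₁v₃` as well. -/
theorem color₁₂_ne_color₄₅ (hK : IsPendantK G w v₁ v₂ v₃ v₄ v₅)
    (hc : IsNormalEdgeColoring G c) : c s(v₁, v₂) ≠ c s(v₄, v₅) := by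
  intro h
  have h₂₄ : c s(v₂, v₄) = c s(v₅, v₃) :=
    hc.color_eq_of_color_eq hK.swap₄₅.nbrs₂.swap_left hK.nbrs₅.swap_right
      (by rwa [Sym2.eq_swap, Sym2.eq_swap (a := v₅)])
  have h₁₃ : c s(v₃, v₁) = c s(v₄, v₅) :=
    hc.color_eq_of_color_eq hK.nbrs₃.swap_left.swap_right hK.nbrs₄.swap_left
      (by rw [Sym2.eq_swap, ← h₂₄, Sym2.eq_swap])
  have hne : c s(v₁, v₂) ≠ c s(v₁, v₃) := by
    have := hc.1.nodup_colors hK.nbrs₁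
    grind
  exact hne (by rw [h, ← h₁₃, Sym2.eq_swap])

theorem color₂₄_ne_color₃₅ (hK : IsPendantK G w v₁ v₂ v₃ v₄ v₅)
    (hc : IsNormalEdgeColoring G c) : c s(v₂, v₄) ≠ c s(v₃, v₅) := by
  intro h
  have h₁₂ : c s(v₂, v₁) = c s(v₅, v₄) :=
    hc.color_eq_of_color_eq hK.swap₄₅.nbrs₂.swap_left.swap_right hK.nbrs₅
      (by rw [h, Sym2.eq_swap])
  exact hK.color₁₂_ne_color₄₅ hc (by rw [Sym2.eq_swap, h₁₂, Sym2.eq_swap])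

theorem color_pendant_ne_color₂₄ (hK : IsPendantK G w v₁ v₂ v₃ v₄ v₅)
    (hc : IsNormalEdgeColoring G c) : c s(v₁, w) ≠ c s(v₂, v₄) := by
  intro h
  have h₁₃ : c s(v₁, v₃) = c s(v₂, v₅) :=
    hc.color_eq_of_color_eq hK.nbrs₁.swap_left hK.nbrs₂ h
  exact hK.swap₂₃.swap₄₅.color₁₂_ne_color₃₄ hc h₁₃

theorem nodup_colors_of_color₄₅_ne (hK : IsPendantK G w v₁ v₂ v₃ v₄ v₅)
    (hc : IsNormalEdgeColoring G c) (h : c s(v₄, v₅) ≠ c s(v₁, w)) :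
    ([s(v₁, w), s(v₁, v₂), s(v₁, v₃), s(v₂, v₄), s(v₂, v₅), s(v₃, v₄), s(v₃, v₅),
      s(v₄, v₅)].map c).Nodup := by
  have hadj₁ := hc.1.nodup_colors hK.nbrs₁
  have hadj₂ := hc.1.nodup_colors hK.nbrs₂
  have hadj₃ := hc.1.nodup_colors hK.nbrs₃
  have hadj₄ := hc.1.nodup_colors hK.nbrs₄
  have hadj₅ := hc.1.nodup_colors hK.nbrs₅
  rw [Sym2.eq_swap (a := v₂) (b := v₁)] at hadj₂
  rw [Sym2.eq_swap (a := v₃) (b := v₁)] at hadj₃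
  rw [Sym2.eq_swap (a := v₄) (b := v₂), Sym2.eq_swap (a := v₄) (b := v₃)] at hadj₄
  rw [Sym2.eq_swap (a := v₅) (b := v₂), Sym2.eq_swap (a := v₅) (b := v₃),
    Sym2.eq_swap (a := v₅) (b := v₄)] at hadj₅
  have h₁₂_₃₄ := hK.color₁₂_ne_color₃₄ hc
  have h₁₂_₃₅ := hK.swap₄₅.color₁₂_ne_color₃₄ hc
  have h₁₃_₂₄ := hK.swap₂₃.color₁₂_ne_color₃₄ hc
  have h₁₃_₂₅ := hK.swap₂₃.swap₄₅.color₁₂_ne_color₃₄ hc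
  have h₁₂_₄₅ := hK.color₁₂_ne_color₄₅ hc
  have h₁₃_₄₅ := hK.swap₂₃.color₁₂_ne_color₄₅ hc
  have h₂₄_₃₅ := hK.color₂₄_ne_color₃₅ hc
  have h₂₅_₃₄ := hK.swap₄₅.color₂₄_ne_color₃₅ hc
  have hw_₂₄ := hK.color_pendant_ne_color₂₄ hc
  have hw_₂₅ := hK.swap₄₅.color_pendant_ne_color₂₄ hc
  have hw_₃₄ := hK.swap₂₃.color_pendant_ne_color₂₄ hc
  have hw_₃₅ := hK.swap₂₃.swap₄₅.color_pendant_ne_color₂₄ hc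
  simp only [List.map_cons, List.map_nil, List.nodup_cons, List.mem_cons, List.not_mem_nil,
    not_or, or_false] at hadj₁ hadj₂ hadj₃ hadj₄ hadj₅ ⊢
  grind

end IsPendantK

theorem IsCubic.isPendantK {V : Type*} {G : SimpleGraph V} {w v₁ v₂ v₃ v₄ v₅ : V}
    (hG : IsCubic G) (h12 : G.Adj v₁ v₂) (h13 : G.Adj v₁ v₃) (h24 : G.Adj v₂ v₄)
    (h25 : G.Adj v₂ v₅) (h34 : G.Adj v₃ v₄) (h35 : G.Adj v₃ v₅) (h45 : G.Adj v₄ v₅)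
    (hw : G.Adj v₁ w) (hw2 : w ≠ v₂) (hw3 : w ≠ v₃) (hne14 : v₁ ≠ v₄) (hne15 : v₁ ≠ v₅)
    (hne23 : v₂ ≠ v₃) : IsPendantK G w v₁ v₂ v₃ v₄ v₅ where
  nbrs₁ := .of_ncard_neighborSet (hG _) hw h12 h13 hw2 hw3 hne23
  nbrs₂ := .of_ncard_neighborSet (hG _) h12.symm h24 h25 hne14 hne15 h45.ne
  nbrs₃ := .of_ncard_neighborSet (hG _) h13.symm h34 h35 hne14 hne15 h45.ne
  nbrs₄ := .of_ncard_neighborSet (hG _) h24.symm h34.symm h45 hne23 h25.ne h35.ne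
  nbrs₅ := .of_ncard_neighborSet (hG _) h25.symm h35.symm h45.symm hne23 h24.ne h34.ne

theorem stmt_7_general {V C : Type*} [Fintype C] (hC : Fintype.card C ≤ 7) {G : SimpleGraph V}
    {w v₁ v₂ v₃ v₄ v₅ : V} (hK : IsPendantK G w v₁ v₂ v₃ v₄ v₅) {c : Sym2 V → C}
    (hc : IsNormalEdgeColoring G c) : c s(v₄, v₅) = c s(v₁, w) := by
  by_contra h
  have hlen := (hK.nodup_colors_of_color₄₅_ne hc h).length_le_card
  simp only [List.length_map, List.length_cons, List.length_nil] at hlen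
  omega

theorem stmt_7 {V : Type*} [Fintype V] (G : SimpleGraph V) (hG : IsCubic G)
    (v₁ v₂ v₃ v₄ v₅ : V) (hdist : ([v₁, v₂, v₃, v₄, v₅] : List V).Nodup)
    (h12 : G.Adj v₁ v₂) (h13 : G.Adj v₁ v₃) (h24 : G.Adj v₂ v₄) (h25 : G.Adj v₂ v₅)
    (h34 : G.Adj v₃ v₄) (h35 : G.Adj v₃ v₅) (h45 : G.Adj v₄ v₅)
    (w : V) (hw : G.Adj v₁ w)
    (hw2 : w ≠ v₂) (hw3 : w ≠ v₃) (hw4 : w ≠ v₄) (hw5 : w ≠ v₅)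
    (c : Sym2 V → Fin 7) (hc : IsNormalEdgeColoring G c) :
    c s(v₄, v₅) = c s(v₁, w) := by
  simp only [List.nodup_cons, List.mem_cons, List.not_mem_nil, not_or, or_false] at hdist
  obtain ⟨⟨-, -, hne14, hne15⟩, ⟨hne23, -⟩, -⟩ := hdist
  exact stmt_7_general (Fintype.card_fin 7).le
    (hG.isPendantK h12 h13 h24 h25 h34 h35 h45 hw hw2 hw3 hne14 hne15 hne23) hc
end

section
/- Let G be a finite simple cubic graph and let c be an edge-coloring of G with colors in a type C. Suppose there exists a function f : C → C → C, symmetric in its arguments, such that for every vertex v and every listing e1, e2, e3 of the three pairwise distinct edges incident to v, one has c(e3) = f(c(e1), c(e2)). Then c is a normal edge-coloring of G. -/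
open SimpleGraph

/-!
At a vertex of degree 3, any two distinct colors `a, b` force the third to be `f a b`, so the whole
color set is `{a, b, f a b}`. Hence two color sets sharing at least two colors coincide. The color
sets of the ends of an edge `uv` share the color of `uv`: if they share another color, their union
has 3 elements, and otherwise it has `3 + 3 - 1 = 5` elements.
-/

/-- The color of every edge at a vertex is the value of `f` at the colors of any two other distinct
edges there, in either order. For a cubic graph this says that `f` completes any two colors at a
vertex to the three colors at that vertex. -/
def IsThirdColorMap {V C : Type*} (G : SimpleGraph V) (c : Sym2 V → C) (f : C → C → C) : Prop :=
  ∀ v : V, ∀ e₁ e₂ e₃ : Sym2 V,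
    e₁ ∈ G.incidenceSet v → e₂ ∈ G.incidenceSet v → e₃ ∈ G.incidenceSet v →
    e₁ ≠ e₂ → e₁ ≠ e₃ → e₂ ≠ e₃ → c e₃ = f (c e₁) (c e₂)

section Sets

variable {α : Type*} {s t : Set α}

theorem exists_eq_triple_of_ncard_eq_three (hs : s.ncard = 3) {x y : α} (hx : x ∈ s)
    (hy : y ∈ s) (hxy : x ≠ y) : ∃ z, x ≠ z ∧ y ≠ z ∧ s = {x, y, z} := by
  have hsub : {x, y} ⊆ s := Set.pair_subset hx hy
  have hrest : (s \ {x, y}).ncard = 1 := by rw [Set.ncard_sdiff hsub, hs, Set.ncard_pair hxy]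
  obtain ⟨z, hz⟩ := Set.ncard_eq_one.mp hrest
  have hzmem : z ∈ s \ {x, y} := hz ▸ Set.mem_singleton z
  refine ⟨z, fun h ↦ hzmem.2 (.inl h.symm), fun h ↦ hzmem.2 (.inr h.symm), ?_⟩
  rw [← Set.union_sdiff_cancel hsub, hz, Set.insert_union, Set.singleton_union]

theorem ncard_union_eq_or_of_nontrivial_inter_imp_eq (hs : s.Finite) (ht : t.Finite)
    (hne : (s ∩ t).Nonempty) (heq : (s ∩ t).Nontrivial → s = t) :
    (s ∪ t).ncard = s.ncard ∨ (s ∪ t).ncard + 1 = s.ncard + t.ncard := by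
  rcases hne.exists_eq_singleton_or_nontrivial with ⟨a, ha⟩ | hnontrivial
  · right
    rw [← Set.ncard_union_add_ncard_inter s t hs ht, ha, Set.ncard_singleton]
  · left
    rw [← heq hnontrivial, Set.union_self]

end Sets

section EdgeColorings

variable {V C : Type*} {G : SimpleGraph V} {c : Sym2 V → C}

theorem ncard_incidenceSet_eq_ncard_neighborSet (G : SimpleGraph V) (v : V) :
    (G.incidenceSet v).ncard = (G.neighborSet v).ncard := by
  classical exact Set.ncard_congr' (G.incidenceSetEquivNeighborSet v)

theorem IsCubic.ncard_incidenceSet (hG : IsCubic G) (v : V) : (G.incidenceSet v).ncard = 3 :=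
  (ncard_incidenceSet_eq_ncard_neighborSet G v).trans (hG v)

theorem IsProperEdgeColoring.injOn_incidenceSet_s8 (hc : IsProperEdgeColoring G c) (v : V) :
    Set.InjOn c (G.incidenceSet v) := fun e he e' he' hcolor ↦
  by_contra fun hne ↦ hc e he.1 e' he'.1 hne ⟨v, he.2, he'.2⟩ hcolor

theorem IsProperEdgeColoring.ncard_colorSet_s8 (hc : IsProperEdgeColoring G c) (v : V) :
    (colorSet G c v).ncard = (G.incidenceSet v).ncard :=
  (hc.injOn_incidenceSet_s8 v).ncard_image

theorem inter_colorSet_nonempty_of_adj (c : Sym2 V → C) {u v : V} (huv : G.Adj u v) :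
    (colorSet G c u ∩ colorSet G c v).Nonempty :=
  ⟨c s(u, v), Set.mem_image_of_mem c ⟨huv, Sym2.mem_mk_left u v⟩,
    Set.mem_image_of_mem c ⟨huv, Sym2.mem_mk_right u v⟩⟩

namespace IsThirdColorMap

variable {f : C → C → C}

theorem colorSet_eq (hf : IsThirdColorMap G c f) {v : V} (hv : (G.incidenceSet v).ncard = 3)
    {a b : C} (ha : a ∈ colorSet G c v) (hb : b ∈ colorSet G c v) (hab : a ≠ b) :
    colorSet G c v = {a, b, f a b} := by
  obtain ⟨e₁, he₁, rfl⟩ := ha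
  obtain ⟨e₂, he₂, rfl⟩ := hb
  have h₁₂ : e₁ ≠ e₂ := ne_of_apply_ne c hab
  obtain ⟨e₃, h₁₃, h₂₃, hedges⟩ := exists_eq_triple_of_ncard_eq_three hv he₁ he₂ h₁₂
  have he₃ : e₃ ∈ G.incidenceSet v := by simp [hedges]
  have hthird : c e₃ = f (c e₁) (c e₂) := hf v e₁ e₂ e₃ he₁ he₂ he₃ h₁₂ h₁₃ h₂₃
  rw [colorSet, hedges, Set.image_insert_eq, Set.image_pair, hthird]

theorem colorSet_eq_of_nontrivial_inter (hf : IsThirdColorMap G c f) {u v : V}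
    (hu : (G.incidenceSet u).ncard = 3) (hv : (G.incidenceSet v).ncard = 3)
    (huv : (colorSet G c u ∩ colorSet G c v).Nontrivial) : colorSet G c u = colorSet G c v := by
  obtain ⟨a, ⟨hau, hav⟩, b, ⟨hbu, hbv⟩, hab⟩ := huv
  rw [hf.colorSet_eq hu hau hbu hab, hf.colorSet_eq hv hav hbv hab]

end IsThirdColorMap

end EdgeColorings

theorem stmt_8_general {V C : Type*} {G : SimpleGraph V} (hG : IsCubic G) {c : Sym2 V → C}
    (hproper : IsProperEdgeColoring G c) {f : C → C → C} (hf : IsThirdColorMap G c f) :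
    IsNormalEdgeColoring G c := by
  refine ⟨hproper, fun u v huv ↦ ?_⟩
  have hcard (w : V) : (colorSet G c w).ncard = 3 :=
    (hproper.ncard_colorSet_s8 w).trans (hG.ncard_incidenceSet w)
  have hfinite (w : V) : (colorSet G c w).Finite :=
    Set.finite_of_ncard_ne_zero (by rw [hcard w]; decide)
  have hunion := ncard_union_eq_or_of_nontrivial_inter_imp_eq (hfinite u) (hfinite v)
    (inter_colorSet_nonempty_of_adj c huv)
    (hf.colorSet_eq_of_nontrivial_inter (hG.ncard_incidenceSet u) (hG.ncard_incidenceSet v))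
  rw [hcard u, hcard v] at hunion
  exact hunion.imp_right Nat.succ.inj

theorem stmt_8 {V : Type*} [Fintype V] (G : SimpleGraph V) (hG : IsCubic G)
    {C : Type*} (c : Sym2 V → C) (hproper : IsProperEdgeColoring G c)
    (f : C → C → C) (hsymm : ∀ a b : C, f a b = f b a)
    (hf : ∀ v : V, ∀ e₁ e₂ e₃ : Sym2 V,
      e₁ ∈ G.incidenceSet v → e₂ ∈ G.incidenceSet v → e₃ ∈ G.incidenceSet v →
      e₁ ≠ e₂ → e₁ ≠ e₃ → e₂ ≠ e₃ → c e₃ = f (c e₁) (c e₂)) :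
    IsNormalEdgeColoring G c := by
  exact stmt_8_general hG hproper hf
end
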